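/- arXiv:1308.1892 — 2 statements merged into one kernel-verified Lean document; each statement's English description precedes it below -/
import Mathlib

section
/- Let C be a quasiminimal pregeometry class, H, H' ∈ C uncountable, G ⊂ H and G' ⊂ H' countable closed subsets, and g : G → G' an isomorphism. Then g is a partial σ-embedding between H and H'. -/
open FirstOrder FirstOrder.Language Set Cardinal



universe u u' v w

namespace QM

variable {L : FirstOrder.Language.{v, w}}

/-- Formulas of `L_{ω₁,ω}`: built from atomic formulas by negation, countable
conjunction (indexed by `ℕ`), and universal quantification; `α` is the type of free
variables and `n` counts the de Bruijn bound variables. Countable disjunctions and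
the existential quantifier are definable via negation. -/
inductive InfFormula (L : FirstOrder.Language.{v, w}) (α : Type u) : ℕ → Type (max u v w)
  | falsum {n : ℕ} : InfFormula L α n
  | equal {n : ℕ} (t₁ t₂ : L.Term (α ⊕ (Fin n))) : InfFormula L α n
  | rel {n l : ℕ} (R : L.Relations l) (ts : Fin l → L.Term (α ⊕ (Fin n))) : InfFormula L α n
  | not {n : ℕ} (φ : InfFormula L α n) : InfFormula L α n
  | iInf {n : ℕ} (φ : ℕ → InfFormula L α n) : InfFormula L α n
  | all {n : ℕ} (φ : InfFormula L α (n + 1)) : InfFormula L α n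

/-- Satisfaction of an `L_{ω₁,ω}`-formula in an `L`-structure `M`, given an
assignment `v` of the free variables and `xs` of the bound variables. -/
def InfFormula.Realize {M : Type u'} [L.Structure M] {α : Type u} :
    ∀ {n : ℕ}, InfFormula L α n → (α → M) → (Fin n → M) → Prop
  | _, .falsum, _, _ => False
  | _, .equal t₁ t₂, v, xs => t₁.realize (Sum.elim v xs) = t₂.realize (Sum.elim v xs)
  | _, .rel R ts, v, xs => Structure.RelMap R (fun i => (ts i).realize (Sum.elim v xs))
  | _, .not φ, v, xs => ¬ φ.Realize v xs
  | _, .iInf φ, v, xs => ∀ i : ℕ, (φ i).Realize v xs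
  | _, .all φ, v, xs => ∀ x : M, φ.Realize v (Fin.snoc xs x)

/-- An `L_{ω₁,ω}`-sentence. -/
abbrev InfSentence (L : FirstOrder.Language.{v, w}) := InfFormula L PEmpty 0

/-- Satisfaction of an `L_{ω₁,ω}`-sentence. -/
def InfSentence.RealizeS (M : Type u') [L.Structure M] (φ : InfSentence L) : Prop :=
  InfFormula.Realize (M := M) φ PEmpty.elim (fun i => i.elim0)

/-- Satisfaction of an `L_{ω₁,ω}`-formula with parameters from the set `A`
and `m` free variables `v̄`, at the tuple `v`. -/
def InfFormula.RealizeP {M : Type u'} [L.Structure M] {A : Set M} {m : ℕ}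
    (φ : InfFormula L (↥A ⊕ Fin m) 0) (v : Fin m → M) : Prop :=
  φ.Realize (Sum.elim Subtype.val v) (fun i => i.elim0)

/-- The domain of a partial map, viewed as a graph (set of pairs). -/
def pdom {H : Type*} {H' : Type*} (p : Set (H × H')) : Set H := Prod.fst '' p

/-- The image of a partial map, viewed as a graph (set of pairs). -/
def pimg {H : Type*} {H' : Type*} (p : Set (H × H')) : Set H' := Prod.snd '' p

/-- The image of a set `X` under a partial map given as a graph. -/
def pimage {H : Type*} {H' : Type*} (p : Set (H × H')) (X : Set H) : Set H' :=
  {b | ∃ a ∈ X, (a, b) ∈ p}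

/-- A partial map (given as its graph `p`) is a partial embedding if it preserves
quantifier-free first-order formulas. (This forces `p` to be the graph of an
injective partial function.) -/
def IsPartialEmbedding {H : Type u} {H' : Type u} [L.Structure H] [L.Structure H']
    (p : Set (H × H')) : Prop :=
  ∀ (n : ℕ) (φ : L.Formula (Fin n)), BoundedFormula.IsQF φ →
    ∀ (a : Fin n → H) (b : Fin n → H'), (∀ i, (a i, b i) ∈ p) →
      (φ.Realize a ↔ φ.Realize b)

/-- A partial map is a σ-embedding if it is a partial embedding and preserves all
`L_{ω₁,ω}`-formulas with (possibly infinitely many) parameters from its domain;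
equivalently `⟨M, m⟩_{m ∈ dom p} ≡_{ω₁,ω} ⟨N, p(m)⟩_{m ∈ dom p}`. -/
def IsSigmaEmbedding {H : Type u} {H' : Type u} [L.Structure H] [L.Structure H']
    (p : Set (H × H')) : Prop :=
  IsPartialEmbedding (L := L) p ∧
    ∀ (φ : InfFormula L (↥(pdom p)) 0) (b : ↥(pdom p) → H'),
      (∀ x : ↥(pdom p), ((x : H), b x) ∈ p) →
        (φ.Realize Subtype.val (fun i => i.elim0) ↔ φ.Realize b (fun i => i.elim0))

/-- A pregeometry (combinatorial geometry) on a set. -/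
structure IsPregeometry {α : Type*} (cl : Set α → Set α) : Prop where
  subset_cl : ∀ X, X ⊆ cl X
  mono : ∀ ⦃X Y : Set α⦄, X ⊆ Y → cl X ⊆ cl Y
  idem : ∀ X, cl (cl X) = cl X
  finChar : ∀ (X : Set α) (y : α), y ∈ cl X → ∃ F : Finset α, ↑F ⊆ X ∧ y ∈ cl ↑F
  exchange : ∀ (X : Set α) (a b : α), a ∈ cl (X ∪ {b}) → a ∉ cl X → b ∈ cl (X ∪ {a})

/-- A pair `⟨H, cl_H⟩` of an `L`-structure and a closure operator on it. -/
structure QMObj (L : FirstOrder.Language.{v, w}) where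
  carrier : Type u
  [str : L.Structure carrier]
  cl : Set carrier → Set carrier

attribute [instance] QMObj.str

/-- `G` is countable and closed, or empty. -/
def CCOE (H : QMObj.{u} L) (G : Set H.carrier) : Prop :=
  (G.Countable ∧ H.cl G = G) ∨ G = ∅

/-- The axioms for a class of pairs `⟨H, cl_H⟩` to be a quasiminimal pregeometry class. -/
structure IsQMClass (C : Set (QMObj.{u} L)) : Prop where
  /-- Closure under isomorphisms, transporting the closure operator. -/
  iso_closed : ∀ H ∈ C, ∀ (N : Type u) [_iN : L.Structure N] (f : H.carrier ≃[L] N),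
      (⟨N, fun X => f '' (H.cl (f ⁻¹' X))⟩ : QMObj L) ∈ C
  /-- Any two members satisfy the same quantifier-free sentences. -/
  qf_theory : ∀ H ∈ C, ∀ H' ∈ C, ∀ (φ : L.Sentence), BoundedFormula.IsQF φ →
      (H.carrier ⊨ φ ↔ H'.carrier ⊨ φ)
  /-- Each `cl_H` is a pregeometry. -/
  pregeom : ∀ H ∈ C, IsPregeometry H.cl
  /-- The closure of a finite set is countable. -/
  cl_finite_countable : ∀ H ∈ C, ∀ X : Set H.carrier, X.Finite → (H.cl X).Countable
  /-- The closure of any set is (the underlying set of) a substructure which, with the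
  restricted closure operator, is again a member of the class. -/
  cl_mem : ∀ H ∈ C, ∀ X : Set H.carrier, ∃ S : L.Substructure H.carrier,
      (S : Set H.carrier) = H.cl X ∧
      (⟨↥S, fun Y => Subtype.val ⁻¹' (H.cl (Subtype.val '' Y))⟩ : QMObj L) ∈ C
  /-- Partial embeddings preserve and reflect the closure relation. -/
  cl_embedding : ∀ H ∈ C, ∀ H' ∈ C, ∀ (p : Set (H.carrier × H'.carrier)),
      IsPartialEmbedding (L := L) p → ∀ X ⊆ pdom p, ∀ (y : H.carrier) (y' : H'.carrier),
        (y, y') ∈ p → (y ∈ H.cl X ↔ y' ∈ H'.cl (pimage p X))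
  /-- ℵ₀-homogeneity over countable closed models, part (i): an isomorphism between
  countable closed (or empty) sets extends by any pair of independent points. -/
  homogeneity₁ : ∀ H ∈ C, ∀ H' ∈ C, ∀ (g : Set (H.carrier × H'.carrier)),
      CCOE H (pdom g) → CCOE H' (pimg g) → IsPartialEmbedding (L := L) g →
      ∀ (x : H.carrier) (x' : H'.carrier), x ∉ H.cl (pdom g) → x' ∉ H'.cl (pimg g) →
        IsPartialEmbedding (L := L) (g ∪ {(x, x')})
  /-- ℵ₀-homogeneity over countable closed models, part (ii). -/
  homogeneity₂ : ∀ H ∈ C, ∀ H' ∈ C, ∀ (g f : Set (H.carrier × H'.carrier)),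
      CCOE H (pdom g) → CCOE H' (pimg g) → IsPartialEmbedding (L := L) g →
      (pdom f).Finite → IsPartialEmbedding (L := L) (g ∪ f) →
      ∀ y ∈ H.cl (pdom f ∪ pdom g), ∃ y' : H'.carrier,
        IsPartialEmbedding (L := L) (g ∪ f ∪ {(y, y')})


/-- `p` is a σ-type over `A` in `m` variables: every countable subset of `p` is
consistent with the structure, i.e. simultaneously satisfiable. -/
def IsSigmaType {M : Type u'} [L.Structure M] {A : Set M} {m : ℕ}
    (p : Set (InfFormula L (↥A ⊕ Fin m) 0)) : Prop :=
  ∀ Φ ⊆ p, Φ.Countable → ∃ v : Fin m → M, ∀ φ ∈ Φ, φ.RealizeP v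

/-- A σ-type `p` is isolated if there is a consistent `L_{ω₁,ω}`-formula `ψ(x̄)`
(possibly with parameters from `M`) such that `ψ` implies every formula of `p`. -/
def IsIsolated {M : Type u'} [L.Structure M] {A : Set M} {m : ℕ}
    (p : Set (InfFormula L (↥A ⊕ Fin m) 0)) : Prop :=
  ∃ ψ : InfFormula L (M ⊕ Fin m) 0,
    (∃ v : Fin m → M, ψ.Realize (Sum.elim id v) (fun i => i.elim0)) ∧
    ∀ φ ∈ p, ∀ v : Fin m → M, ψ.Realize (Sum.elim id v) (fun i => i.elim0) → φ.RealizeP v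

/-- A σ-type `p` is realised if some tuple satisfies every formula of `p`. -/
def IsRealized {M : Type u'} [L.Structure M] {A : Set M} {m : ℕ}
    (p : Set (InfFormula L (↥A ⊕ Fin m) 0)) : Prop :=
  ∃ v : Fin m → M, ∀ φ ∈ p, φ.RealizeP v

/-- `B` is an independent subset of the pregeometry `⟨H, cl_H⟩`. -/
def IsIndep (H : QMObj.{u} L) (B : Set H.carrier) : Prop :=
  ∀ x ∈ B, x ∉ H.cl (B \ {x})

/-- `B` is a basis of the pregeometry `⟨H, cl_H⟩`: a maximal independent subset. -/
def IsBasis (H : QMObj.{u} L) (B : Set H.carrier) : Prop :=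
  IsIndep H B ∧ ∀ B' : Set H.carrier, B ⊆ B' → IsIndep H B' → B' = B

/-- The model-theoretic algebraic closure of `X` in `M`: the set of elements
satisfying some first-order formula with parameters in `X` having finitely many
solutions. -/
def aclS (L : FirstOrder.Language.{v, w}) (M : Type u) [L.Structure M] (X : Set M) :
    Set M :=
  {y | ∃ (n : ℕ) (φ : L.BoundedFormula (Fin n) 1) (v : Fin n → M),
    (∀ i, v i ∈ X) ∧ φ.Realize v ![y] ∧ {z : M | φ.Realize v ![z]}.Finite}


/-!
The isomorphisms between countable closed subsets of `H` and `H'` form a back-and-forth system, so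
by Karp's theorem they preserve `L_{ω₁,ω}`. To add a point `x ∉ G` to the domain of `g : G → G'`,
pick `x' ∉ G'`, which exists because `H'` is uncountable. By the first homogeneity axiom
`g ∪ {(x, x')}` is a partial embedding, and by the second its finite extensions form a
back-and-forth system between the countable sets `cl (G ∪ {x})` and `cl (G' ∪ {x'})`, whence an
isomorphism between these.
-/

section Graph

variable {M N : Type*}

theorem mem_pdom {p : Set (M × N)} {x : M} : x ∈ pdom p ↔ ∃ y, (x, y) ∈ p := by
  simp [pdom]

theorem mem_pimg {p : Set (M × N)} {y : N} : y ∈ pimg p ↔ ∃ x, (x, y) ∈ p := by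
  simp [pimg]

theorem pdom_mono {p q : Set (M × N)} (h : p ⊆ q) : pdom p ⊆ pdom q := image_mono h

theorem pimg_mono {p q : Set (M × N)} (h : p ⊆ q) : pimg p ⊆ pimg q := image_mono h

theorem subset_prod_iff {p : Set (M × N)} {A : Set M} {B : Set N} :
    p ⊆ A ×ˢ B ↔ pdom p ⊆ A ∧ pimg p ⊆ B := by
  rw [prod_eq, subset_inter_iff, pdom, pimg, image_subset_iff, image_subset_iff]

theorem pdom_inv (p : Set (M × N)) : pdom (SetRel.inv p) = pimg p := by
  ext y
  simp only [mem_pdom, mem_pimg, SetRel.mem_inv]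

theorem pimg_inv (p : Set (M × N)) : pimg (SetRel.inv p) = pdom p := by
  ext x
  simp only [mem_pdom, mem_pimg, SetRel.mem_inv]

theorem inv_insert (x : M) (y : N) (p : Set (M × N)) :
    SetRel.inv (insert (x, y) p) = insert (y, x) (SetRel.inv p) := by
  ext ⟨b, a⟩
  simp [and_comm]

end Graph

theorem isQF_restrictFreeVar {α β : Type*} [DecidableEq α] {n : ℕ} {φ : L.BoundedFormula α n}
    (hφ : φ.IsQF) (f : φ.freeVarFinset → β) : (φ.restrictFreeVar f).IsQF := by
  induction hφ with
  | falsum => exact .falsum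
  | of_isAtomic h =>
    cases h with
    | equal t₁ t₂ => exact .of_isAtomic (.equal _ _)
    | rel R ts => exact .of_isAtomic (.rel _ _)
  | imp _ _ ih₁ ih₂ => exact .imp (ih₁ _) (ih₂ _)

section PartialEmbedding

variable {M N : Type u} [L.Structure M] [L.Structure N] {p : Set (M × N)}

theorem IsPartialEmbedding.inv (hp : IsPartialEmbedding (L := L) p) :
    IsPartialEmbedding (L := L) (SetRel.inv p) :=
  fun n φ hφ b a hba => (hp n φ hφ a b hba).symm

theorem IsPartialEmbedding.realize_iff (hp : IsPartialEmbedding (L := L) p) {α : Type*}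
    {φ : L.Formula α} (hφ : φ.IsQF) {a : α → M} {b : α → N} (hab : ∀ i, (a i, b i) ∈ p) :
    φ.Realize a ↔ φ.Realize b := by
  classical
  let e := φ.freeVarFinset.equivFin
  have key := hp _ _ (isQF_restrictFreeVar hφ e) (fun i => a (e.symm i)) (fun i => b (e.symm i))
    fun i => hab _
  rwa [Formula.Realize, BoundedFormula.realize_restrictFreeVar a (by simp), Formula.Realize,
    BoundedFormula.realize_restrictFreeVar b (by simp)] at key

theorem IsPartialEmbedding.iUnion_of_directed {ι : Type*} [Nonempty ι] {p : ι → Set (M × N)}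
    (hdir : Directed (· ⊆ ·) p) (hp : ∀ i, IsPartialEmbedding (L := L) (p i)) :
    IsPartialEmbedding (L := L) (⋃ i, p i) := by
  intro n φ hφ a b hab
  choose i hi using fun k => mem_iUnion.1 (hab k)
  obtain ⟨j, hj⟩ := hdir.finite_le i
  exact hp j n φ hφ a b fun k => hj k (hi k)

end PartialEmbedding

section BackAndForth

variable {M N : Type u} [L.Structure M] [L.Structure N]
  {A : Set M} {B : Set N} {S : Set (Set (M × N))} {p : Set (M × N)}

/-- A back-and-forth system between `A ⊆ M` and `B ⊆ N`: a set of (graphs of) partial embeddings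
from `A` to `B` in which every member can be extended to have any given point of `A` in its domain,
or any given point of `B` in its image. -/
structure IsBackAndForth (L : FirstOrder.Language.{v, w}) {M N : Type u} [L.Structure M]
    [L.Structure N] (A : Set M) (B : Set N) (S : Set (Set (M × N))) : Prop where
  isPartialEmbedding : ∀ p ∈ S, IsPartialEmbedding (L := L) p
  subset_prod : ∀ p ∈ S, p ⊆ A ×ˢ B
  forth : ∀ p ∈ S, ∀ x ∈ A, ∃ q ∈ S, p ⊆ q ∧ x ∈ pdom q
  back : ∀ p ∈ S, ∀ y ∈ B, ∃ q ∈ S, p ⊆ q ∧ y ∈ pimg q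

theorem IsBackAndForth.realize_iff (hS : IsBackAndForth L (univ : Set M) (univ : Set N) S)
    {α : Type*} {n : ℕ} (φ : InfFormula L α n) (hp : p ∈ S) {a : α → M} {b : α → N}
    (hab : ∀ i, (a i, b i) ∈ p) {xs : Fin n → M} {ys : Fin n → N}
    (hxy : ∀ i, (xs i, ys i) ∈ p) : φ.Realize a xs ↔ φ.Realize b ys := by
  induction φ generalizing p with
  | falsum => exact Iff.rfl
  | equal t₁ t₂ =>
    simpa only [Formula.realize_equal, InfFormula.Realize] using
      (hS.isPartialEmbedding p hp).realize_iff (φ := t₁.equal t₂) (.of_isAtomic (.equal _ _))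
        (Sum.rec hab hxy)
  | rel R ts =>
    simpa only [Formula.realize_rel, InfFormula.Realize] using
      (hS.isPartialEmbedding p hp).realize_iff (φ := R.formula ts) (.of_isAtomic (.rel _ _))
        (Sum.rec hab hxy)
  | not φ ih => exact not_congr (ih hp hab hxy)
  | iInf φ ih => exact forall_congr' fun i => ih i hp hab hxy
  | all φ ih =>
    have realize_snoc_iff {q x y} (hq : q ∈ S) (hpq : p ⊆ q) (hq_xy : (x, y) ∈ q) :
        φ.Realize a (Fin.snoc xs x) ↔ φ.Realize b (Fin.snoc ys y) := by
      refine ih hq (fun i => hpq (hab i)) fun i => ?_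
      refine Fin.lastCases ?_ (fun i => ?_) i
      · simpa only [Fin.snoc_last] using hq_xy
      · simpa only [Fin.snoc_castSucc] using hpq (hxy i)
    constructor
    · intro h y
      obtain ⟨q, hq, hpq, hy⟩ := hS.back p hp y (mem_univ y)
      obtain ⟨x, hq_xy⟩ := mem_pimg.1 hy
      exact (realize_snoc_iff hq hpq hq_xy).1 (h x)
    · intro h x
      obtain ⟨q, hq, hpq, hx⟩ := hS.forth p hp x (mem_univ x)
      obtain ⟨y, hq_xy⟩ := mem_pdom.1 hx
      exact (realize_snoc_iff hq hpq hq_xy).2 (h y)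

theorem IsBackAndForth.exists_isPartialEmbedding_of_countable (hS : IsBackAndForth L A B S)
    (hA : A.Countable) (hB : B.Countable) (hp : p ∈ S) :
    ∃ q, p ⊆ q ∧ IsPartialEmbedding (L := L) q ∧ pdom q = A ∧ pimg q = B := by
  have := hA.to_subtype
  have := hB.to_subtype
  let _ : Encodable (A ⊕ B) := Encodable.ofCountable _
  let 𝒟 : A ⊕ B → Order.Cofinal S := Sum.elim
    (fun x => ⟨{q | x.1 ∈ pdom q.1}, fun ⟨q, hq⟩ =>
      let ⟨r, hr, hqr, hx⟩ := hS.forth q hq x x.2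
      ⟨⟨r, hr⟩, hx, hqr⟩⟩)
    (fun y => ⟨{q | y.1 ∈ pimg q.1}, fun ⟨q, hq⟩ =>
      let ⟨r, hr, hqr, hy⟩ := hS.back q hq y y.2
      ⟨⟨r, hr⟩, hy, hqr⟩⟩)
  let I := Order.idealOfCofinals ⟨p, hp⟩ 𝒟
  have I_meets := Order.cofinal_meets_idealOfCofinals ⟨p, hp⟩ 𝒟
  have subset_union {q : S} (hq : q ∈ I) : q.1 ⊆ ⋃ r : I, r.1.1 :=
    subset_iUnion (fun r : I => r.1.1) ⟨q, hq⟩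
  obtain ⟨dom_subset, img_subset⟩ := subset_prod_iff.1 <|
    iUnion_subset fun q : I => hS.subset_prod q.1.1 q.1.2
  refine ⟨⋃ q : I, q.1.1, subset_union (Order.mem_idealOfCofinals _ 𝒟), ?_,
    dom_subset.antisymm fun x hx => ?_, img_subset.antisymm fun y hy => ?_⟩
  · have : Nonempty I := I.nonempty.to_subtype
    exact .iUnion_of_directed (directedOn_iff_directed.1 I.directed)
      fun q => hS.isPartialEmbedding q.1.1 q.1.2
  · obtain ⟨q, hxq, hq⟩ := I_meets (.inl ⟨x, hx⟩)
    exact pdom_mono (subset_union hq) hxq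
  · obtain ⟨q, hyq, hq⟩ := I_meets (.inr ⟨y, hy⟩)
    exact pimg_mono (subset_union hq) hyq

end BackAndForth

section Pregeometry

variable {α : Type*} {cl : Set α → Set α}

theorem IsPregeometry.cl_subset_cl (h : IsPregeometry cl) {X Y : Set α} (hXY : X ⊆ cl Y) :
    cl X ⊆ cl Y :=
  (h.mono hXY).trans (h.idem Y).subset

theorem IsPregeometry.countable_cl (h : IsPregeometry cl)
    (hfin : ∀ F : Set α, F.Finite → (cl F).Countable) {X : Set α} (hX : X.Countable) :
    (cl X).Countable := by
  refine ((countable_ofPred_finite_subset hX).biUnion fun F hF => hfin F hF.1).mono fun y hy => ?_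
  obtain ⟨F, hFX, hyF⟩ := h.finChar X y hy
  exact mem_biUnion (x := (F : Set α)) ⟨F.finite_toSet, hFX⟩ hyF

end Pregeometry

section QuasiminimalClass

variable {C : Set (QMObj.{u} L)} {H H' : QMObj.{u} L} {g r : Set (H.carrier × H'.carrier)}

/-- `g` is (the graph of) an isomorphism between countable closed subsets of `H` and `H'`. As closed
sets are substructures, such isomorphisms are the partial embeddings with countable closed domain
and image. -/
structure IsCountableClosedIso (H H' : QMObj.{u} L) (g : Set (H.carrier × H'.carrier)) :
    Prop where
  countable_pdom : (pdom g).Countable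
  cl_pdom : H.cl (pdom g) = pdom g
  countable_pimg : (pimg g).Countable
  cl_pimg : H'.cl (pimg g) = pimg g
  isPartialEmbedding : IsPartialEmbedding (L := L) g

namespace IsCountableClosedIso

theorem inv (hg : IsCountableClosedIso H H' g) : IsCountableClosedIso H' H (SetRel.inv g) where
  countable_pdom := by rw [pdom_inv]; exact hg.countable_pimg
  cl_pdom := by rw [pdom_inv]; exact hg.cl_pimg
  countable_pimg := by rw [pimg_inv]; exact hg.countable_pdom
  cl_pimg := by rw [pimg_inv]; exact hg.cl_pdom
  isPartialEmbedding := hg.isPartialEmbedding.inv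

theorem exists_insert_right (hC : IsQMClass C) (hH : H ∈ C) (hH' : H' ∈ C)
    (hg : IsCountableClosedIso H H' g) (hgr : g ⊆ r) (hfin : (r \ g).Finite)
    (hr : IsPartialEmbedding (L := L) r) {x : H.carrier} (hx : x ∈ H.cl (pdom r)) :
    ∃ y ∈ H'.cl (pimg r), IsPartialEmbedding (L := L) (insert (x, y) r) := by
  by_cases hxr : x ∈ pdom r
  · obtain ⟨y, hxy⟩ := mem_pdom.1 hxr
    refine ⟨y, (hC.pregeom H' hH').subset_cl _ (mem_pimg.2 ⟨x, hxy⟩), ?_⟩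
    rwa [insert_eq_of_mem hxy]
  obtain ⟨y, hy⟩ : ∃ y, IsPartialEmbedding (L := L) (insert (x, y) r) := by
    have := hC.homogeneity₂ H hH H' hH' g (r \ g) (.inl ⟨hg.countable_pdom, hg.cl_pdom⟩)
      (.inl ⟨hg.countable_pimg, hg.cl_pimg⟩) hg.isPartialEmbedding (hfin.image _)
      (by rwa [union_sdiff_cancel hgr]) x
      (by rwa [union_comm, pdom, pdom, ← image_union, union_sdiff_cancel hgr])
    simpa only [union_sdiff_cancel hgr, union_singleton] using this
  refine ⟨y, ?_, hy⟩
  have y_mem_cl := (hC.cl_embedding H hH H' hH' _ hy (pdom r) (pdom_mono (subset_insert _ _)) x y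
    (mem_insert _ _)).1 hx
  refine (hC.pregeom H' hH').mono ?_ y_mem_cl
  rintro b ⟨a, ha, hab | hab⟩
  · obtain rfl : a = x := congrArg Prod.fst hab
    exact absurd ha hxr
  · exact mem_pimg.2 ⟨a, hab⟩

theorem exists_insert_left (hC : IsQMClass C) (hH : H ∈ C) (hH' : H' ∈ C)
    (hg : IsCountableClosedIso H H' g) (hgr : g ⊆ r) (hfin : (r \ g).Finite)
    (hr : IsPartialEmbedding (L := L) r) {y : H'.carrier} (hy : y ∈ H'.cl (pimg r)) :
    ∃ x ∈ H.cl (pdom r), IsPartialEmbedding (L := L) (insert (x, y) r) := by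
  have hfin_inv : (SetRel.inv r \ SetRel.inv g).Finite :=
    hfin.preimage (f := Prod.swap) Prod.swap_injective.injOn
  obtain ⟨x, hx, h⟩ := hg.inv.exists_insert_right hC hH' hH (SetRel.inv_mono hgr) hfin_inv hr.inv
    (by rwa [pdom_inv])
  refine ⟨x, by rwa [pimg_inv] at hx, ?_⟩
  simpa only [inv_insert, SetRel.inv_inv] using h.inv

theorem isBackAndForth_finiteExtensions (hC : IsQMClass C) (hH : H ∈ C) (hH' : H' ∈ C)
    (hg : IsCountableClosedIso H H' g) (hgr : g ⊆ r) :
    IsBackAndForth L (H.cl (pdom r)) (H'.cl (pimg r))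
      {q | r ⊆ q ∧ (q \ g).Finite ∧ q ⊆ H.cl (pdom r) ×ˢ H'.cl (pimg r) ∧
        IsPartialEmbedding (L := L) q} where
  isPartialEmbedding _ hq := hq.2.2.2
  subset_prod _ hq := hq.2.2.1
  forth := by
    rintro q ⟨hrq, hfin, hsub, hq⟩ x hx
    obtain ⟨y, hy, hq'⟩ := hg.exists_insert_right hC hH hH' (hgr.trans hrq) hfin hq
      ((hC.pregeom H hH).mono (pdom_mono hrq) hx)
    have hy' := (hC.pregeom H' hH').cl_subset_cl (subset_prod_iff.1 hsub).2 hy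
    exact ⟨_, ⟨hrq.trans (subset_insert _ _), (hfin.insert _).subset insert_sdiff_subset,
      insert_subset ⟨hx, hy'⟩ hsub, hq'⟩, subset_insert _ _, mem_pdom.2 ⟨y, mem_insert _ _⟩⟩
  back := by
    rintro q ⟨hrq, hfin, hsub, hq⟩ y hy
    obtain ⟨x, hx, hq'⟩ := hg.exists_insert_left hC hH hH' (hgr.trans hrq) hfin hq
      ((hC.pregeom H' hH').mono (pimg_mono hrq) hy)
    have hx' := (hC.pregeom H hH).cl_subset_cl (subset_prod_iff.1 hsub).1 hx
    exact ⟨_, ⟨hrq.trans (subset_insert _ _), (hfin.insert _).subset insert_sdiff_subset,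
      insert_subset ⟨hx', hy⟩ hsub, hq'⟩, subset_insert _ _, mem_pimg.2 ⟨x, mem_insert _ _⟩⟩

theorem exists_superset_of_finite_sdiff (hC : IsQMClass C) (hH : H ∈ C) (hH' : H' ∈ C)
    (hg : IsCountableClosedIso H H' g) (hgr : g ⊆ r) (hfin : (r \ g).Finite)
    (hr : IsPartialEmbedding (L := L) r) :
    ∃ q, r ⊆ q ∧ IsCountableClosedIso H H' q := by
  have hcl := hC.pregeom H hH
  have hcl' := hC.pregeom H' hH'
  have dom_countable : (pdom r).Countable := by
    rw [← union_sdiff_cancel hgr, pdom, image_union]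
    exact hg.countable_pdom.union (hfin.image _).countable
  have img_countable : (pimg r).Countable := by
    rw [← union_sdiff_cancel hgr, pimg, image_union]
    exact hg.countable_pimg.union (hfin.image _).countable
  have cl_dom_countable := hcl.countable_cl (hC.cl_finite_countable H hH) dom_countable
  have cl_img_countable := hcl'.countable_cl (hC.cl_finite_countable H' hH') img_countable
  obtain ⟨q, hrq, hq, hdom, himg⟩ :=
    (hg.isBackAndForth_finiteExtensions hC hH hH' hgr).exists_isPartialEmbedding_of_countable
      cl_dom_countable cl_img_countable
      ⟨subset_rfl, hfin, subset_prod_iff.2 ⟨hcl.subset_cl _, hcl'.subset_cl _⟩, hr⟩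
  exact ⟨q, hrq, by rwa [hdom], by rw [hdom, hcl.idem], by rwa [himg], by rw [himg, hcl'.idem], hq⟩

theorem exists_superset_mem_pdom [Uncountable H'.carrier] (hC : IsQMClass C) (hH : H ∈ C)
    (hH' : H' ∈ C) (hg : IsCountableClosedIso H H' g) (x : H.carrier) :
    ∃ q, IsCountableClosedIso H H' q ∧ g ⊆ q ∧ x ∈ pdom q := by
  by_cases hx : x ∈ pdom g
  · exact ⟨g, hg, subset_rfl, hx⟩
  obtain ⟨y, hy⟩ : (pimg g)ᶜ.Nonempty :=
    nonempty_compl.2 fun h => not_countable_univ (h ▸ hg.countable_pimg)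
  have insert_isPartialEmbedding : IsPartialEmbedding (L := L) (insert (x, y) g) := by
    rw [← union_singleton]
    exact hC.homogeneity₁ H hH H' hH' g (.inl ⟨hg.countable_pdom, hg.cl_pdom⟩)
      (.inl ⟨hg.countable_pimg, hg.cl_pimg⟩) hg.isPartialEmbedding x y (by rwa [hg.cl_pdom])
      (by rwa [hg.cl_pimg])
  obtain ⟨q, hgq, hq⟩ := hg.exists_superset_of_finite_sdiff hC hH hH' (subset_insert _ _)
    ((finite_singleton (x, y)).subset (sdiff_subset_iff.2 union_singleton.ge))
    insert_isPartialEmbedding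
  exact ⟨q, hq, (subset_insert _ _).trans hgq, mem_pdom.2 ⟨y, hgq (mem_insert _ _)⟩⟩

end IsCountableClosedIso

theorem isBackAndForth_isCountableClosedIso [Uncountable H.carrier] [Uncountable H'.carrier]
    (hC : IsQMClass C) (hH : H ∈ C) (hH' : H' ∈ C) :
    IsBackAndForth L univ univ {g | IsCountableClosedIso H H' g} where
  isPartialEmbedding _ hg := hg.isPartialEmbedding
  subset_prod g _ := by rw [univ_prod_univ]; exact subset_univ g
  forth _ hg x _ := hg.exists_superset_mem_pdom hC hH hH' x
  back _ hg y _ := by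
    obtain ⟨q, hq, hgq, hy⟩ := hg.inv.exists_superset_mem_pdom hC hH' hH y
    exact ⟨SetRel.inv q, hq.inv, SetRel.inv_mono hgq, by rwa [pimg_inv]⟩

end QuasiminimalClass

/-- If `H, H' ∈ C` are uncountable, `G ⊆ H`, `G' ⊆ H'` are countable
closed and `g : G → G'` is an isomorphism, then `g` is a partial σ-embedding. -/
theorem statement_9 {L : FirstOrder.Language.{v, w}} (C : Set (QMObj.{u} L))
    (hC : IsQMClass C) (H : QMObj.{u} L) (hH : H ∈ C) (H' : QMObj.{u} L) (hH' : H' ∈ C)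
    (huncH : Uncountable H.carrier) (huncH' : Uncountable H'.carrier)
    (g : Set (H.carrier × H'.carrier))
    (hGc : (pdom g).Countable) (hGcl : H.cl (pdom g) = pdom g)
    (hG'c : (pimg g).Countable) (hG'cl : H'.cl (pimg g) = pimg g)
    (hg : IsPartialEmbedding (L := L) g) :
    IsSigmaEmbedding (L := L) g := by
  have hg_iso : IsCountableClosedIso H H' g := ⟨hGc, hGcl, hG'c, hG'cl, hg⟩
  have h_system := isBackAndForth_isCountableClosedIso hC hH hH'
  exact ⟨hg, fun φ b hb => h_system.realize_iff φ hg_iso hb (fun i => i.elim0)⟩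

end QM
end

section
/- Let C be a quasiminimal pregeometry class, H, H' ∈ C uncountable, and g : H ⇀ H' a partial σ-embedding with X = dom(g) and X' = img(g) countable. Then g extends to a partial σ-embedding ĝ : H ⇀ H' with dom(ĝ) = cl(X) and img(ĝ) = cl(X'); in particular ĝ restricts to an isomorphism of cl(X) onto cl(X'). -/
open FirstOrder FirstOrder.Language Set Cardinal



universe u u' v w

namespace QM

variable {L : FirstOrder.Language.{v, w}}

/-!
If `y ∈ cl(X)` then `y ∈ cl(F)` for some finite `F ⊆ X`. All elements outside `cl(F)` have the
same `L_{ω₁,ω}`-type over `F`, so some formula over `F` holds of `y` and has all its solutions in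
`cl(F)`. As `cl(F)` is countable, this formula can be strengthened to one isolating the type of `y`
over `X`, and so a σ-embedding with domain `X` extends to `y`. Going back and forth over the
countable sets `cl(X)` and `cl(X')`, the union of the extensions is a partial embedding of `cl(X)`
onto `cl(X')`.

A priori this union need not preserve infinitary formulas. But the finite extensions of an
isomorphism between countable closed sets form a back-and-forth system: inside the closure of the
domain this is `ℵ₀`-homogeneity; for a point `x` outside, one first extends the map to the closure
of its domain and then sends `x` to a point outside the closure of the image, which exists because
the structures are uncountable.
-/

/-! ### Infinitary formulas -/

namespace InfFormula

variable {α : Type*} {β : Type*} {M : Type*} [L.Structure M]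

/-- Substitution of free variables: every free variable `x` is replaced by `g x`, which is either a
free variable or one of `k` new de Bruijn variables, numbered below the existing ones. This is the
analogue of `FirstOrder.Language.BoundedFormula.relabel`. -/
def relabel {k : ℕ} (g : α → β ⊕ Fin k) : ∀ {n : ℕ}, InfFormula L α n → InfFormula L β (k + n)
  | _, .falsum => .falsum
  | _, .equal t₁ t₂ =>
    .equal (t₁.relabel (BoundedFormula.relabelAux g _)) (t₂.relabel (BoundedFormula.relabelAux g _))
  | _, .rel R ts => .rel R fun i => (ts i).relabel (BoundedFormula.relabelAux g _)
  | _, .not φ => .not (φ.relabel g)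
  | _, .iInf φ => .iInf fun i => (φ i).relabel g
  | _, .all φ => .all (φ.relabel g)

theorem realize_relabel {k n : ℕ} (g : α → β ⊕ Fin k) (φ : InfFormula L α n) (v : β → M)
    (xs : Fin (k + n) → M) :
    (φ.relabel g).Realize v xs ↔
      φ.Realize (Sum.elim v (xs ∘ Fin.castAdd n) ∘ g) (xs ∘ Fin.natAdd k) := by
  induction φ with
  | falsum => rfl
  | equal => simp [relabel, Realize]
  | rel => simp [relabel, Realize]
  | not φ ih => simp [relabel, Realize, ih]
  | iInf φ ih => simp [relabel, Realize, ih]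
  | all φ ih => simp [relabel, Realize, ih]

/-- Satisfaction of a formula without free de Bruijn variables under an assignment of its named free
variables; the analogue of `FirstOrder.Language.Formula.Realize`. -/
def Holds (φ : InfFormula L α 0) (v : α → M) : Prop :=
  φ.Realize v fun i => i.elim0

/-- Renaming of the free variables along `f`. -/
def rename (f : α → β) (φ : InfFormula L α 0) : InfFormula L β 0 :=
  φ.relabel (k := 0) (Sum.inl ∘ f)

/-- Universal quantification over the distinguished free variable `none`. -/
def forallNone (φ : InfFormula L (Option α) 0) : InfFormula L α 0 :=
  .all (φ.relabel (k := 1) (Option.elim' (.inr 0) .inl))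

/-- Binary conjunction, encoded as the countable conjunction `φ ∧ ψ ∧ ψ ∧ ⋯`. -/
def and (φ ψ : InfFormula L α 0) : InfFormula L α 0 :=
  .iInf fun i => Nat.casesOn i φ fun _ => ψ

theorem holds_iInf {φ : ℕ → InfFormula L α 0} {v : α → M} :
    (InfFormula.iInf φ).Holds v ↔ ∀ i, (φ i).Holds v :=
  Iff.rfl

theorem holds_and {φ ψ : InfFormula L α 0} {v : α → M} :
    (φ.and ψ).Holds v ↔ φ.Holds v ∧ ψ.Holds v :=
  holds_iInf.trans ⟨fun h => ⟨h 0, h 1⟩, fun h i => Nat.casesOn i h.1 fun _ => h.2⟩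

theorem holds_rename {f : α → β} {φ : InfFormula L α 0} {v : β → M} :
    (φ.rename f).Holds v ↔ φ.Holds (v ∘ f) :=
  (realize_relabel (k := 0) _ φ v _).trans
    (iff_of_eq (congrArg (φ.Realize (v ∘ f)) (Subsingleton.elim _ _)))

theorem holds_forallNone {φ : InfFormula L (Option α) 0} {v : α → M} :
    φ.forallNone.Holds v ↔ ∀ z, φ.Holds (Option.elim' z v) := by
  refine forall_congr' fun z => (realize_relabel (k := 1) _ φ v _).trans (iff_of_eq ?_)
  rw [Holds]
  congr 1
  · funext x
    cases x <;> rfl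
  · exact Subsingleton.elim _ _

end InfFormula

section Families

variable {ι κ : Type*} {M N : Type*} [L.Structure M] [L.Structure N]

/-- The families `a` and `b` have the same `L_{ω₁,ω}`-type, i.e.
`⟨M, a i⟩_{i ∈ ι} ≡_{ω₁,ω} ⟨N, b i⟩_{i ∈ ι}`. -/
def SigmaEquiv (L : FirstOrder.Language.{v, w}) [L.Structure M] [L.Structure N] (a : ι → M)
    (b : ι → N) : Prop :=
  ∀ φ : InfFormula L ι 0, φ.Holds a ↔ φ.Holds b

namespace SigmaEquiv

variable {a : ι → M} {b : ι → N}

theorem symm (h : SigmaEquiv L a b) : SigmaEquiv L b a :=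
  fun φ => (h φ).symm

theorem of_imp (h : ∀ φ : InfFormula L ι 0, φ.Holds a → φ.Holds b) : SigmaEquiv L a b :=
  fun φ => ⟨h φ, not_imp_not.1 (h φ.not)⟩

theorem exists_holds_not_holds (h : ¬ SigmaEquiv L a b) :
    ∃ φ : InfFormula L ι 0, φ.Holds a ∧ ¬ φ.Holds b := by
  contrapose! h
  exact of_imp h

theorem comp_of_forall_mem_range (h : SigmaEquiv L a b) {c : κ → M} {d : κ → N}
    (hcd : ∀ j, (c j, d j) ∈ range fun i => (a i, b i)) : SigmaEquiv L c d := by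
  choose e he using hcd
  obtain rfl : a ∘ e = c := funext fun j => congrArg Prod.fst (he j)
  obtain rfl : b ∘ e = d := funext fun j => congrArg Prod.snd (he j)
  exact fun φ => by simpa only [InfFormula.holds_rename] using h (φ.rename e)

theorem realize_iff_of_isQF (h : SigmaEquiv L a b) {φ : L.Formula ι}
    (hφ : BoundedFormula.IsQF φ) : φ.Realize a ↔ φ.Realize b := by
  induction hφ with
  | falsum => rfl
  | of_isAtomic hφ =>
    rw [Formula.Realize, Formula.Realize,
      Subsingleton.elim (default : Fin 0 → M) fun i => i.elim0,
      Subsingleton.elim (default : Fin 0 → N) fun i => i.elim0]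
    cases hφ with
    | equal t₁ t₂ =>
      simpa only [BoundedFormula.realize_bdEqual, InfFormula.Holds, InfFormula.Realize]
        using h (.equal t₁ t₂)
    | rel R ts =>
      simpa only [BoundedFormula.realize_rel, InfFormula.Holds, InfFormula.Realize]
        using h (.rel R ts)
  | imp _ _ ih₁ ih₂ => exact imp_congr ih₁ ih₂

end SigmaEquiv

/-- The formula `ψ` isolates the `L_{ω₁,ω}`-type of `y` over the family `a`. The variable `none`
of `ψ` stands for the element whose type is considered, the variable `some i` for `a i`. -/
structure IsolatesType (ψ : InfFormula L (Option ι) 0) (a : ι → M) (y : M) : Prop where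
  holds : ψ.Holds (Option.elim' y a)
  sigmaEquiv : ∀ z, ψ.Holds (Option.elim' z a) →
    SigmaEquiv L (Option.elim' y a) (Option.elim' z a)

-- The conjunction of `θ` with formulas separating the type of `y` from the other types realised in
-- `θ(M)` isolates the type of `y`.
theorem exists_isolatesType_of_countable {a : ι → M} {y : M} {θ : InfFormula L (Option ι) 0}
    (hy : θ.Holds (Option.elim' y a)) (hθ : {z | θ.Holds (Option.elim' z a)}.Countable) :
    ∃ ψ : InfFormula L (Option ι) 0, IsolatesType ψ a y := by
  have separate (z : M) : ∃ ψ : InfFormula L (Option ι) 0, ψ.Holds (Option.elim' y a) ∧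
      (ψ.Holds (Option.elim' z a) → SigmaEquiv L (Option.elim' y a) (Option.elim' z a)) := by
    by_cases h : SigmaEquiv L (Option.elim' y a) (Option.elim' z a)
    · exact ⟨θ, hy, fun _ => h⟩
    · obtain ⟨ψ, hψy, hψz⟩ := SigmaEquiv.exists_holds_not_holds h
      exact ⟨ψ, hψy, fun hz => absurd hz hψz⟩
  choose ψ hψy hψ using separate
  obtain ⟨e, he⟩ := hθ.exists_eq_range ⟨y, hy⟩
  refine ⟨θ.and (.iInf (ψ ∘ e)),
    InfFormula.holds_and.2 ⟨hy, InfFormula.holds_iInf.2 fun n => hψy (e n)⟩, fun z hz => ?_⟩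
  obtain ⟨hθz, hψz⟩ := InfFormula.holds_and.1 hz
  obtain ⟨n, rfl⟩ : z ∈ range e := he ▸ hθz
  exact hψ _ (InfFormula.holds_iInf.1 hψz n)

theorem IsolatesType.exists_sigmaEquiv {ψ : InfFormula L (Option ι) 0} {a : ι → M} {y : M}
    (hψ : IsolatesType ψ a y) {b : ι → N} (hab : SigmaEquiv L a b) :
    ∃ y', SigmaEquiv L (Option.elim' y a) (Option.elim' y' b) := by
  have transfer (χ : InfFormula L (Option ι) 0) :
      (∀ z, χ.Holds (Option.elim' z a)) ↔ ∀ z, χ.Holds (Option.elim' z b) := by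
    simpa only [InfFormula.holds_forallNone] using hab χ.forallNone
  obtain ⟨y', hy'⟩ : ∃ y', ψ.Holds (Option.elim' y' b) := by
    by_contra! hne
    exact (transfer ψ.not).2 hne y hψ.holds
  refine ⟨y', SigmaEquiv.of_imp fun φ hφ => ?_⟩
  have imp_type : ∀ z, ¬ (ψ.and φ.not).Holds (Option.elim' z a) := fun z hz =>
    have ⟨hψz, hφz⟩ := InfFormula.holds_and.1 hz
    hφz ((hψ.sigmaEquiv z hψz φ).1 hφ)
  by_contra hφ'
  exact (transfer (ψ.and φ.not).not).1 imp_type y' (InfFormula.holds_and.2 ⟨hy', hφ'⟩)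

end Families

/-! ### Partial embeddings and back-and-forth systems -/

section PartialMaps

theorem pdom_image_swap {α β : Type*} (q : Set (α × β)) : pdom (Prod.swap '' q) = pimg q :=
  image_image Prod.fst Prod.swap q

theorem pimg_image_swap {α β : Type*} (q : Set (α × β)) : pimg (Prod.swap '' q) = pdom q :=
  image_image Prod.snd Prod.swap q

theorem pdom_image_diag {α : Type*} (X : Set α) : pdom ((fun x => (x, x)) '' X) = X := by
  simp only [pdom, image_image, image_id']

theorem pimg_image_diag {α : Type*} (X : Set α) : pimg ((fun x => (x, x)) '' X) = X := by
  simp only [pimg, image_image, image_id']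

variable {M N : Type u} [L.Structure M] [L.Structure N] {p g : Set (M × N)}

namespace IsPartialEmbedding

theorem mono (h : IsPartialEmbedding (L := L) p) (hg : g ⊆ p) : IsPartialEmbedding (L := L) g :=
  fun n φ hφ a b hab => h n φ hφ a b fun i => hg (hab i)

theorem swap (h : IsPartialEmbedding (L := L) p) :
    IsPartialEmbedding (L := L) (Prod.swap '' p) :=
  fun n φ hφ a b hab => (h n φ hφ b a fun i => by simpa using hab i).symm

theorem sUnion {D : Set (Set (M × N))} (hD : DirectedOn (· ⊆ ·) D) (hne : D.Nonempty)
    (h : ∀ p ∈ D, IsPartialEmbedding (L := L) p) : IsPartialEmbedding (L := L) (⋃₀ D) := by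
  intro n φ hφ a b hab
  obtain ⟨p, hpD, hp⟩ := hD.exists_mem_subset_of_finite_of_subset_sUnion hne
    (finite_range fun i => (a i, b i)) (range_subset_iff.2 hab)
  exact h p hpD n φ hφ a b fun i => hp (mem_range_self i)

theorem image_diag (X : Set M) : IsPartialEmbedding (L := L) ((fun x => (x, x)) '' X) := by
  intro n φ _ a b hab
  obtain rfl : a = b := funext fun i => by
    obtain ⟨x, -, hx⟩ := hab i
    exact (congrArg Prod.fst hx).symm.trans (congrArg Prod.snd hx)
  rfl

theorem realize_iff_of_isAtomic (h : IsPartialEmbedding (L := L) p) {γ : Type*} {φ : L.Formula γ}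
    (hφ : BoundedFormula.IsAtomic φ) {a : γ → M} {b : γ → N} (hab : ∀ i, (a i, b i) ∈ p) :
    φ.Realize a ↔ φ.Realize b := by
  classical
  let e := φ.freeVarFinset.equivFin
  have hψ : BoundedFormula.IsAtomic (φ.restrictFreeVar e) := by
    cases hφ
    · exact .equal _ _
    · exact .rel _ _
  have restrict {K : Type u} [L.Structure K] (c : γ → K) :
      Formula.Realize (φ.restrictFreeVar e) (fun i => c (e.symm i)) ↔ φ.Realize c :=
    BoundedFormula.realize_restrictFreeVar c (by simp)
  rw [← restrict a, ← restrict b]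
  exact h _ _ hψ.isQF _ _ fun i => hab _

theorem eq_iff (h : IsPartialEmbedding (L := L) p) {x y : M} {x' y' : N} (hx : (x, x') ∈ p)
    (hy : (y, y') ∈ p) : x = y ↔ x' = y' := by
  simpa using h 2 (Term.equal (Term.var 0) (Term.var 1)) (BoundedFormula.IsAtomic.equal _ _).isQF
    ![x, y] ![x', y'] (Fin.forall_fin_two.2 ⟨hx, hy⟩)

theorem pimage_pdom (h : IsPartialEmbedding (L := L) p) (hg : g ⊆ p) :
    pimage p (pdom g) = pimg g := by
  ext b
  constructor
  · rintro ⟨_, ⟨⟨a, b'⟩, hab', rfl⟩, hab⟩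
    exact ⟨(a, b'), hab', (h.eq_iff (hg hab') hab).1 rfl⟩
  · rintro ⟨⟨a, b⟩, hab, rfl⟩
    exact ⟨a, ⟨(a, b), hab, rfl⟩, hg hab⟩

end IsPartialEmbedding

theorem SigmaEquiv.isSigmaEmbedding {ι : Type*} {a : ι → M} {b : ι → N} (h : SigmaEquiv L a b)
    (hp : p ⊆ range fun i => (a i, b i)) : IsSigmaEmbedding (L := L) p :=
  ⟨fun _ _ hφ _ _ hcd => (h.comp_of_forall_mem_range fun i => hp (hcd i)).realize_iff_of_isQF hφ,
    fun φ _ hb => (h.comp_of_forall_mem_range fun x => hp (hb x)) φ⟩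

namespace IsSigmaEmbedding

theorem sigmaEquiv {ι : Type*} {a : ι → M} {b : ι → N} (h : IsSigmaEmbedding (L := L) p)
    (hab : ∀ i, (a i, b i) ∈ p) : SigmaEquiv L a b := by
  have exists_image (x : pdom p) : ∃ y, ((x : M), y) ∈ p := by
    obtain ⟨_, ⟨x, y⟩, hxy, rfl⟩ := x
    exact ⟨y, hxy⟩
  choose f hf using exists_image
  have hpf : SigmaEquiv L ((↑) : pdom p → M) f := fun φ => h.2 φ f hf
  exact hpf.comp_of_forall_mem_range fun i => ⟨⟨a i, mem_image_of_mem _ (hab i)⟩,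
    congrArg (Prod.mk (a i)) ((h.1.eq_iff (hf _) (hab i)).1 rfl)⟩

theorem swap (h : IsSigmaEmbedding (L := L) p) : IsSigmaEmbedding (L := L) (Prod.swap '' p) := by
  refine (h.sigmaEquiv fun i : p => i.2).symm.isSigmaEmbedding ?_
  rintro _ ⟨x, hx, rfl⟩
  exact ⟨⟨x, hx⟩, rfl⟩

theorem of_swap (h : IsSigmaEmbedding (L := L) (Prod.swap '' p)) : IsSigmaEmbedding (L := L) p := by
  simpa only [image_image, Prod.swap_swap, image_id'] using h.swap

end IsSigmaEmbedding

/-- A back-and-forth system between `M` and `N`: a class of partial embeddings in which every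
member can be extended, within the class, to any given further point of `M` or of `N`. -/
structure IsBackAndForthSystem (L : FirstOrder.Language.{v, w}) [L.Structure M] [L.Structure N]
    (P : Set (M × N) → Prop) : Prop where
  isPartialEmbedding : ∀ {p}, P p → IsPartialEmbedding (L := L) p
  forth : ∀ {p}, P p → ∀ x, ∃ y, P (insert (x, y) p)
  back : ∀ {p}, P p → ∀ y, ∃ x, P (insert (x, y) p)

namespace IsBackAndForthSystem

variable {P : Set (M × N) → Prop}

theorem realize_iff (h : IsBackAndForthSystem L P) {ι : Type*} {a : ι → M} {b : ι → N} {n : ℕ}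
    (φ : InfFormula L ι n) {xs : Fin n → M} {ys : Fin n → N} (hp : P p)
    (hab : ∀ i, (a i, b i) ∈ p) (hxy : ∀ j, (xs j, ys j) ∈ p) :
    φ.Realize a xs ↔ φ.Realize b ys := by
  have atomic {n : ℕ} {ψ : L.Formula (ι ⊕ Fin n)} (hψ : BoundedFormula.IsAtomic ψ) {xs : Fin n → M}
      {ys : Fin n → N} {p} (hp : P p) (hab : ∀ i, (a i, b i) ∈ p) (hxy : ∀ j, (xs j, ys j) ∈ p) :
      ψ.Realize (Sum.elim a xs) ↔ ψ.Realize (Sum.elim b ys) :=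
    (h.isPartialEmbedding hp).realize_iff_of_isAtomic hψ (Sum.rec hab hxy)
  induction φ generalizing p with
  | falsum => rfl
  | equal t₁ t₂ =>
    have hφ : (Term.equal t₁ t₂).IsAtomic := .equal _ _
    exact Formula.realize_equal.symm.trans ((atomic hφ hp hab hxy).trans Formula.realize_equal)
  | rel R ts =>
    have hφ : (R.formula ts).IsAtomic := .rel _ _
    exact Formula.realize_rel.symm.trans ((atomic hφ hp hab hxy).trans Formula.realize_rel)
  | not φ ih => exact not_congr (ih hp hab hxy)
  | iInf φ ih => exact forall_congr' fun i => ih i hp hab hxy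
  | all φ ih =>
    have step {x : M} {y : N} (hxy' : P (insert (x, y) p)) :
        φ.Realize a (Fin.snoc xs x) ↔ φ.Realize b (Fin.snoc ys y) :=
      ih hxy' (fun i => mem_insert_of_mem _ (hab i)) fun j => by
        induction j using Fin.lastCases with
        | last => simp
        | cast j => simp [hxy j]
    exact ⟨fun hx y => have ⟨x, hxy'⟩ := h.back hp y; (step hxy').1 (hx x),
      fun hy x => have ⟨y, hxy'⟩ := h.forth hp x; (step hxy').2 (hy y)⟩

theorem isSigmaEmbedding (h : IsBackAndForthSystem L P) (hp : P p) : IsSigmaEmbedding (L := L) p :=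
  ⟨h.isPartialEmbedding hp, fun φ _ hb => h.realize_iff φ hp hb (fun j => j.elim0)⟩

end IsBackAndForthSystem

/-- The partial embedding `p` extends `g` by finitely many pairs. -/
structure IsFiniteExtension (L : FirstOrder.Language.{v, w}) [L.Structure M] [L.Structure N]
    (g p : Set (M × N)) : Prop where
  isPartialEmbedding : IsPartialEmbedding (L := L) p
  subset : g ⊆ p
  finite_diff : (p \ g).Finite

namespace IsFiniteExtension

theorem refl (h : IsPartialEmbedding (L := L) g) : IsFiniteExtension L g g :=
  ⟨h, Subset.rfl, by simp⟩

theorem insert_of_isPartialEmbedding (h : IsFiniteExtension L g p) {x : M × N}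
    (hx : IsPartialEmbedding (L := L) (insert x p)) : IsFiniteExtension L g (insert x p) :=
  ⟨hx, h.subset.trans (subset_insert x p),
    (h.finite_diff.insert x).subset (by grind)⟩

theorem swap (h : IsFiniteExtension L g p) :
    IsFiniteExtension L (Prod.swap '' g) (Prod.swap '' p) :=
  ⟨h.isPartialEmbedding.swap, image_mono h.subset,
    by simpa only [image_sdiff Prod.swap_injective] using h.finite_diff.image Prod.swap⟩

theorem of_swap (hp : IsFiniteExtension L (Prod.swap '' g) (Prod.swap '' p)) :
    IsFiniteExtension L g p := by
  simpa only [image_image, Prod.swap_swap, image_id'] using hp.swap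

theorem countable_image (h : IsFiniteExtension L g p) {α : Type*} {f : M × N → α}
    (hg : (f '' g).Countable) : (f '' p).Countable := by
  rw [← union_sdiff_cancel h.subset, image_union]
  exact hg.union (h.finite_diff.image f).countable

end IsFiniteExtension

end PartialMaps

-- By Rasiowa–Sikorski: the extensions meeting a given point of `A` or of `B` form one of countably
-- many cofinal sets.
theorem exists_directedOn_of_back_and_forth {α β : Type*} {P : Set (α × β) → Prop}
    {p₀ : Set (α × β)} (hp₀ : P p₀) {A : Set α} {B : Set β} (hA : A.Countable) (hB : B.Countable)
    (forth : ∀ p, P p → ∀ a ∈ A, ∃ b, P (insert (a, b) p))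
    (back : ∀ p, P p → ∀ b ∈ B, ∃ a, P (insert (a, b) p)) :
    ∃ D : Set (Set (α × β)), DirectedOn (· ⊆ ·) D ∧ p₀ ∈ D ∧ (∀ p ∈ D, P p) ∧
      A ⊆ pdom (⋃₀ D) ∧ B ⊆ pimg (⋃₀ D) := by
  have := hA.to_subtype
  have := hB.to_subtype
  let _ := Encodable.ofCountable (A ⊕ B)
  let meeting : A ⊕ B → Order.Cofinal {p // P p} := Sum.elim
    (fun a => ⟨{p | (a : α) ∈ pdom p.1}, fun p =>
      have ⟨b, hb⟩ := forth p.1 p.2 a a.2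
      ⟨⟨_, hb⟩, ⟨(a, b), mem_insert _ _, rfl⟩, subset_insert _ _⟩⟩)
    (fun b => ⟨{p | (b : β) ∈ pimg p.1}, fun p =>
      have ⟨a, ha⟩ := back p.1 p.2 b b.2
      ⟨⟨_, ha⟩, ⟨(a, b), mem_insert _ _, rfl⟩, subset_insert _ _⟩⟩)
  let I := Order.idealOfCofinals ⟨p₀, hp₀⟩ meeting
  have meets := Order.cofinal_meets_idealOfCofinals ⟨p₀, hp₀⟩ meeting
  refine ⟨Subtype.val '' (I : Set {p // P p}), ?_,
    mem_image_of_mem _ (Order.mem_idealOfCofinals ⟨p₀, hp₀⟩ meeting), ?_,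
    fun a ha => ?_, fun b hb => ?_⟩
  · exact directedOn_image.2 I.directed
  · rintro _ ⟨p, -, rfl⟩
    exact p.2
  · obtain ⟨p, hap, hpI⟩ := meets (.inl ⟨a, ha⟩)
    exact image_mono (subset_sUnion_of_mem (mem_image_of_mem _ hpI)) hap
  · obtain ⟨p, hbp, hpI⟩ := meets (.inr ⟨b, hb⟩)
    exact image_mono (subset_sUnion_of_mem (mem_image_of_mem _ hpI)) hbp

/-! ### Quasiminimal pregeometry classes -/

section QuasiminimalClasses

variable {C : Set (QMObj.{u} L)} {H H' : QMObj.{u} L} {g p : Set (H.carrier × H'.carrier)}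

theorem CCOE.countable {G : Set H.carrier} (hG : CCOE H G) : G.Countable :=
  hG.elim And.left fun h => h ▸ countable_empty

namespace IsQMClass

theorem countable_cl (hC : IsQMClass C) (hH : H ∈ C) {X : Set H.carrier} (hX : X.Countable) :
    (H.cl X).Countable := by
  have cl_subset : H.cl X ⊆ ⋃ F ∈ {F : Set H.carrier | F.Finite ∧ F ⊆ X}, H.cl F := fun y hy =>
    have ⟨F, hFX, hyF⟩ := (hC.pregeom H hH).finChar X y hy
    mem_biUnion ⟨F.finite_toSet, hFX⟩ hyF
  exact ((countable_ofPred_finite_subset hX).biUnion fun F hF =>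
    hC.cl_finite_countable H hH F hF.1).mono cl_subset

theorem exists_notMem_cl (hC : IsQMClass C) (hH : H ∈ C) [Uncountable H.carrier]
    {X : Set H.carrier} (hX : X.Countable) : ∃ x, x ∉ H.cl X := by
  by_contra! h
  exact not_countable_univ ((hC.countable_cl hH hX).mono fun x _ => h x)

theorem ccoe_cl (hC : IsQMClass C) (hH : H ∈ C) {X : Set H.carrier} (hX : X.Countable) :
    CCOE H (H.cl X) :=
  .inl ⟨hC.countable_cl hH hX, (hC.pregeom H hH).idem X⟩

theorem mem_cl_iff_mem_cl (hC : IsQMClass C) (hH : H ∈ C) (hH' : H' ∈ C)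
    (hp : IsPartialEmbedding (L := L) p) (hgp : g ⊆ p) {y : H.carrier} {y' : H'.carrier}
    (hy : (y, y') ∈ p) : y ∈ H.cl (pdom g) ↔ y' ∈ H'.cl (pimg g) := by
  rw [← hp.pimage_pdom hgp]
  exact hC.cl_embedding H hH H' hH' p hp (pdom g) (image_mono hgp) y y' hy

end IsQMClass

/-- The relation `g` is the graph of an isomorphism between countable closed sets, or is empty:
these are the partial embeddings over which the class is `ℵ₀`-homogeneous. -/
structure IsCountableClosedIso_s10 (H H' : QMObj.{u} L) (g : Set (H.carrier × H'.carrier)) : Prop where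
  isPartialEmbedding : IsPartialEmbedding (L := L) g
  ccoe_pdom : CCOE H (pdom g)
  ccoe_pimg : CCOE H' (pimg g)

theorem IsCountableClosedIso_s10.swap (hg : IsCountableClosedIso_s10 H H' g) :
    IsCountableClosedIso_s10 H' H (Prod.swap '' g) where
  isPartialEmbedding := hg.isPartialEmbedding.swap
  ccoe_pdom := (pdom_image_swap g).symm ▸ hg.ccoe_pimg
  ccoe_pimg := (pimg_image_swap g).symm ▸ hg.ccoe_pdom

theorem IsCountableClosedIso_s10.image_diag {G : Set H.carrier} (hG : CCOE H G) :
    IsCountableClosedIso_s10 H H ((fun x => (x, x)) '' G) where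
  isPartialEmbedding := .image_diag G
  ccoe_pdom := (pdom_image_diag G).symm ▸ hG
  ccoe_pimg := (pimg_image_diag G).symm ▸ hG

theorem IsQMClass.exists_isCountableClosedIso (hC : IsQMClass C) (hH : H ∈ C) (hH' : H' ∈ C)
    {P : Set (H.carrier × H'.carrier) → Prop} (hP : ∀ p, P p → IsPartialEmbedding (L := L) p)
    (hg : P g) (hX : (pdom g).Countable) (hX' : (pimg g).Countable)
    (forth : ∀ p, P p → ∀ y ∈ H.cl (pdom p), ∃ y', P (insert (y, y') p))
    (back : ∀ p, P p → ∀ y' ∈ H'.cl (pimg p), ∃ y, P (insert (y, y') p)) :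
    ∃ q, g ⊆ q ∧ IsCountableClosedIso_s10 H H' q ∧
      pdom q = H.cl (pdom g) ∧ pimg q = H'.cl (pimg g) := by
  obtain ⟨D, hD, hgD, hDP, hdom, himg⟩ := exists_directedOn_of_back_and_forth
    (P := fun p => P p ∧ g ⊆ p ∧ pdom p ⊆ H.cl (pdom g))
    ⟨hg, Subset.rfl, (hC.pregeom H hH).subset_cl _⟩
    (hC.countable_cl hH hX) (hC.countable_cl hH' hX')
    (fun p ⟨hp, hgp, hpX⟩ y hy => by
      obtain ⟨y', hy'⟩ := forth p hp y ((hC.pregeom H hH).mono (image_mono hgp) hy)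
      refine ⟨y', hy', hgp.trans (subset_insert _ _), ?_⟩
      rw [pdom, image_insert_eq]
      exact insert_subset hy hpX)
    (fun p ⟨hp, hgp, hpX⟩ y' hy' => by
      obtain ⟨y, hy⟩ := back p hp y' ((hC.pregeom H' hH').mono (image_mono hgp) hy')
      refine ⟨y, hy, hgp.trans (subset_insert _ _), ?_⟩
      rw [pdom, image_insert_eq]
      exact insert_subset ((hC.mem_cl_iff_mem_cl hH hH' (hP _ hy)
        (hgp.trans (subset_insert _ _)) (mem_insert _ _)).2 hy') hpX)
  have hq : IsPartialEmbedding (L := L) (⋃₀ D) :=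
    .sUnion hD ⟨g, hgD⟩ fun p hp => hP p (hDP p hp).1
  have hpdom : pdom (⋃₀ D) = H.cl (pdom g) := by
    refine Subset.antisymm ?_ hdom
    rintro _ ⟨x, ⟨p, hp, hxp⟩, rfl⟩
    exact (hDP p hp).2.2 (mem_image_of_mem _ hxp)
  have hpimg : pimg (⋃₀ D) = H'.cl (pimg g) := by
    refine Subset.antisymm ?_ himg
    rintro _ ⟨x, hx, rfl⟩
    exact (hC.mem_cl_iff_mem_cl hH hH' hq (subset_sUnion_of_mem hgD) hx).1
      (hpdom ▸ mem_image_of_mem _ hx)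
  exact ⟨⋃₀ D, subset_sUnion_of_mem hgD,
    ⟨hq, hpdom ▸ hC.ccoe_cl hH hX, hpimg ▸ hC.ccoe_cl hH' hX'⟩, hpdom, hpimg⟩

theorem IsCountableClosedIso_s10.isPartialEmbedding_insert (hC : IsQMClass C) (hH : H ∈ C)
    (hH' : H' ∈ C) (hg : IsCountableClosedIso_s10 H H' g) {x : H.carrier} {x' : H'.carrier}
    (hx : x ∉ H.cl (pdom g)) (hx' : x' ∉ H'.cl (pimg g)) :
    IsPartialEmbedding (L := L) (insert (x, x') g) := by
  rw [← union_singleton]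
  exact hC.homogeneity₁ H hH H' hH' g hg.ccoe_pdom hg.ccoe_pimg hg.isPartialEmbedding x x' hx hx'

namespace IsFiniteExtension

theorem forth_of_mem_cl (hC : IsQMClass C) (hH : H ∈ C) (hH' : H' ∈ C)
    (hg : IsCountableClosedIso_s10 H H' g) (hp : IsFiniteExtension L g p) {y : H.carrier}
    (hy : y ∈ H.cl (pdom p)) : ∃ y', IsFiniteExtension L g (insert (y, y') p) := by
  have hpg : g ∪ p \ g = p := union_sdiff_cancel hp.subset
  have hdom : pdom (p \ g) ∪ pdom g = pdom p := by
    rw [pdom, pdom, ← image_union, union_comm, hpg, pdom]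
  obtain ⟨y', hy'⟩ := hC.homogeneity₂ H hH H' hH' g (p \ g) hg.ccoe_pdom hg.ccoe_pimg
    hg.isPartialEmbedding (hp.finite_diff.image _) (hpg.symm ▸ hp.isPartialEmbedding) y
    (hdom.symm ▸ hy)
  rw [hpg, union_singleton] at hy'
  exact ⟨y', hp.insert_of_isPartialEmbedding hy'⟩

theorem back_of_mem_cl (hC : IsQMClass C) (hH : H ∈ C) (hH' : H' ∈ C)
    (hg : IsCountableClosedIso_s10 H H' g) (hp : IsFiniteExtension L g p) {y' : H'.carrier}
    (hy' : y' ∈ H'.cl (pimg p)) : ∃ y, IsFiniteExtension L g (insert (y, y') p) := by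
  rw [← pdom_image_swap] at hy'
  obtain ⟨y, hy⟩ := forth_of_mem_cl hC hH' hH hg.swap hp.swap hy'
  exact ⟨y, of_swap (by rwa [image_insert_eq])⟩

theorem forth [Uncountable H'.carrier] (hC : IsQMClass C) (hH : H ∈ C) (hH' : H' ∈ C)
    (hg : IsCountableClosedIso_s10 H H' g) (hp : IsFiniteExtension L g p) (y : H.carrier) :
    ∃ y', IsFiniteExtension L g (insert (y, y') p) := by
  by_cases hy : y ∈ H.cl (pdom p)
  · exact forth_of_mem_cl hC hH hH' hg hp hy
  have hX' : (pimg p).Countable := hp.countable_image hg.ccoe_pimg.countable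
  obtain ⟨y', hy'⟩ := hC.exists_notMem_cl hH' hX'
  obtain ⟨q, hpq, hq, hdom, himg⟩ := hC.exists_isCountableClosedIso hH hH'
    (fun _ => isPartialEmbedding) hp (hp.countable_image hg.ccoe_pdom.countable) hX'
    (fun _ hr _ => forth_of_mem_cl hC hH hH' hg hr)
    (fun _ hr _ => back_of_mem_cl hC hH hH' hg hr)
  have hqy : IsPartialEmbedding (L := L) (insert (y, y') q) :=
    hq.isPartialEmbedding_insert hC hH hH'
      (by rwa [hdom, (hC.pregeom H hH).idem]) (by rwa [himg, (hC.pregeom H' hH').idem])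
  exact ⟨y', hp.insert_of_isPartialEmbedding (hqy.mono (insert_subset_insert hpq))⟩

theorem back [Uncountable H.carrier] (hC : IsQMClass C) (hH : H ∈ C) (hH' : H' ∈ C)
    (hg : IsCountableClosedIso_s10 H H' g) (hp : IsFiniteExtension L g p) (y' : H'.carrier) :
    ∃ y, IsFiniteExtension L g (insert (y, y') p) := by
  obtain ⟨y, hy⟩ := forth hC hH' hH hg.swap hp.swap y'
  exact ⟨y, of_swap (by rwa [image_insert_eq])⟩

end IsFiniteExtension

theorem IsCountableClosedIso_s10.isBackAndForthSystem [Uncountable H.carrier] [Uncountable H'.carrier]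
    (hC : IsQMClass C) (hH : H ∈ C) (hH' : H' ∈ C) (hg : IsCountableClosedIso_s10 H H' g) :
    IsBackAndForthSystem L (IsFiniteExtension L g) where
  isPartialEmbedding := IsFiniteExtension.isPartialEmbedding
  forth := IsFiniteExtension.forth hC hH hH' hg
  back := IsFiniteExtension.back hC hH hH' hg

theorem IsCountableClosedIso_s10.isSigmaEmbedding [Uncountable H.carrier] [Uncountable H'.carrier]
    (hC : IsQMClass C) (hH : H ∈ C) (hH' : H' ∈ C) (hg : IsCountableClosedIso_s10 H H' g)
    (hp : IsFiniteExtension L g p) : IsSigmaEmbedding (L := L) p :=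
  (hg.isBackAndForthSystem hC hH hH').isSigmaEmbedding hp

section Types

variable {ι : Type*} {a : ι → H.carrier}

theorem IsQMClass.mem_cl_range_iff_of_sigmaEquiv (hC : IsQMClass C) (hH : H ∈ C) (hH' : H' ∈ C)
    {b : ι → H'.carrier} {x : H.carrier} {y : H'.carrier}
    (h : SigmaEquiv L (Option.elim' x a) (Option.elim' y b)) :
    x ∈ H.cl (range a) ↔ y ∈ H'.cl (range b) := by
  have hp := (h.isSigmaEmbedding Subset.rfl).1
  have hmem := hC.mem_cl_iff_mem_cl hH hH' hp (g := range fun i => (a i, b i))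
    (range_subset_iff.2 fun i => ⟨some i, rfl⟩) ⟨none, rfl⟩
  rw [pdom, pimg, ← range_comp, ← range_comp] at hmem
  exact hmem

variable [Uncountable H.carrier]

theorem IsQMClass.sigmaEquiv_of_notMem_cl (hC : IsQMClass C) (hH : H ∈ C)
    (ha : (range a).Countable) {x y : H.carrier} (hx : x ∉ H.cl (range a))
    (hy : y ∉ H.cl (range a)) : SigmaEquiv L (Option.elim' x a) (Option.elim' y a) := by
  let d : Set (H.carrier × H.carrier) := (fun z => (z, z)) '' H.cl (range a)
  have hd : IsCountableClosedIso_s10 H H d := .image_diag (hC.ccoe_cl hH ha)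
  have hidem := (hC.pregeom H hH).idem (range a)
  have hxy : IsPartialEmbedding (L := L) (insert (x, y) d) :=
    hd.isPartialEmbedding_insert hC hH hH
      (by rwa [pdom_image_diag, hidem]) (by rwa [pimg_image_diag, hidem])
  have hext := (IsFiniteExtension.refl hd.isPartialEmbedding).insert_of_isPartialEmbedding hxy
  refine (hd.isSigmaEmbedding hC hH hH hext).sigmaEquiv fun i => ?_
  cases i with
  | none => exact mem_insert _ _
  | some i =>
    exact mem_insert_of_mem _ ⟨a i, (hC.pregeom H hH).subset_cl _ (mem_range_self i), rfl⟩

theorem IsQMClass.exists_holds_imp_mem_cl (hC : IsQMClass C) (hH : H ∈ C)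
    (ha : (range a).Countable) {y : H.carrier} (hy : y ∈ H.cl (range a)) :
    ∃ θ : InfFormula L (Option ι) 0, θ.Holds (Option.elim' y a) ∧
      ∀ z, θ.Holds (Option.elim' z a) → z ∈ H.cl (range a) := by
  obtain ⟨x, hx⟩ := hC.exists_notMem_cl hH ha
  obtain ⟨θ, hθy, hθx⟩ := SigmaEquiv.exists_holds_not_holds 
    fun h => hx ((hC.mem_cl_range_iff_of_sigmaEquiv hH hH h).1 hy)
  refine ⟨θ, hθy, fun z hθz => ?_⟩
  by_contra hz
  exact hθx ((hC.sigmaEquiv_of_notMem_cl hH ha hz hx θ).1 hθz)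

theorem IsQMClass.exists_isolatesType (hC : IsQMClass C) (hH : H ∈ C) {y : H.carrier}
    (hy : y ∈ H.cl (range a)) : ∃ ψ : InfFormula L (Option ι) 0, IsolatesType ψ a y := by
  obtain ⟨F, hFa, hyF⟩ := (hC.pregeom H hH).finChar _ y hy
  obtain ⟨s, hs⟩ : ∃ s : F → ι, range (a ∘ s) = F := by
    choose s hs using fun x : F => hFa x.2
    exact ⟨s, (congrArg range (funext hs)).trans Subtype.range_coe⟩
  have hF : (range (a ∘ s)).Countable := hs ▸ F.countable_toSet
  have elim_comp (z : H.carrier) :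
      Option.elim' z a ∘ Option.map s = Option.elim' z (a ∘ s) := by
    funext i
    cases i <;> rfl
  obtain ⟨θ, hθy, hθ⟩ := hC.exists_holds_imp_mem_cl hH hF (hs.symm ▸ hyF)
  have holds_iff (z : H.carrier) : (θ.rename (Option.map s)).Holds (Option.elim' z a) ↔
      θ.Holds (Option.elim' z (a ∘ s)) := by
    rw [InfFormula.holds_rename, elim_comp]
  refine exists_isolatesType_of_countable ((holds_iff y).2 hθy) ?_
  exact (hC.countable_cl hH hF).mono fun z hz => hθ z ((holds_iff z).1 hz)

end Types

theorem IsSigmaEmbedding.forth_of_mem_cl [Uncountable H.carrier] (hC : IsQMClass C) (hH : H ∈ C)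
    (hp : IsSigmaEmbedding (L := L) p) {y : H.carrier} (hy : y ∈ H.cl (pdom p)) :
    ∃ y', IsSigmaEmbedding (L := L) (insert (y, y') p) := by
  have hdom : pdom p = range fun i : p => i.1.1 := image_eq_range _ _
  obtain ⟨ψ, hψ⟩ := hC.exists_isolatesType hH (hdom ▸ hy)
  obtain ⟨y', hy'⟩ := hψ.exists_sigmaEquiv (hp.sigmaEquiv fun i : p => i.2)
  exact ⟨y', hy'.isSigmaEmbedding (insert_subset ⟨none, rfl⟩ fun x hx => ⟨some ⟨x, hx⟩, rfl⟩)⟩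

theorem IsSigmaEmbedding.back_of_mem_cl [Uncountable H'.carrier] (hC : IsQMClass C) (hH' : H' ∈ C)
    (hp : IsSigmaEmbedding (L := L) p) {y' : H'.carrier} (hy' : y' ∈ H'.cl (pimg p)) :
    ∃ y, IsSigmaEmbedding (L := L) (insert (y, y') p) := by
  rw [← pdom_image_swap] at hy'
  obtain ⟨y, hy⟩ := hp.swap.forth_of_mem_cl hC hH' hy'
  exact ⟨y, .of_swap (by rwa [image_insert_eq])⟩

end QuasiminimalClasses

/-- A partial σ-embedding `g` between uncountable `H, H' ∈ C` with
countable domain `X` and image `X'` extends to a partial σ-embedding `ĝ` with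
`dom ĝ = cl(X)` and `img ĝ = cl(X')`; in particular `ĝ` is an isomorphism (a bijective
partial embedding) of `cl(X)` onto `cl(X')`. -/
theorem statement_10 {L : FirstOrder.Language.{v, w}} (C : Set (QMObj.{u} L))
    (hC : IsQMClass C) (H : QMObj.{u} L) (hH : H ∈ C) (H' : QMObj.{u} L) (hH' : H' ∈ C)
    (huncH : Uncountable H.carrier) (huncH' : Uncountable H'.carrier)
    (g : Set (H.carrier × H'.carrier))
    (hg : IsSigmaEmbedding (L := L) g)
    (hX : (pdom g).Countable) (hX' : (pimg g).Countable) :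
    ∃ ghat : Set (H.carrier × H'.carrier), g ⊆ ghat ∧
      IsSigmaEmbedding (L := L) ghat ∧
      pdom ghat = H.cl (pdom g) ∧ pimg ghat = H'.cl (pimg g) := by
  obtain ⟨ghat, hgg, hghat, hdom, himg⟩ :=
    hC.exists_isCountableClosedIso hH hH' (fun _ h => h.1) hg hX hX'
      (fun _ hp _ => hp.forth_of_mem_cl hC hH) (fun _ hp _ => hp.back_of_mem_cl hC hH')
  exact ⟨ghat, hgg, hghat.isSigmaEmbedding hC hH hH' (.refl hghat.isPartialEmbedding), hdom, himg⟩

end QM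
end
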